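/- For all t, q ∈ [1/2, 1) with t < q, there exist a finite nonempty set Ω and a selection function σ on Ω such that σ is t-representable but not q-representable. -/

import Mathlib

open Finset

variable {Ω : Type*}

/-- The measure of a finite set of states given weights `w`: `μ(A) = ∑_{ω ∈ A} w ω`. -/
noncomputable def mea (w : Ω → ℝ) (A : Finset Ω) : ℝ := ∑ ω ∈ A, w ω

/-- `w` is a probability weight function: nonnegative and summing to 1. -/
def IsProbWeight [Fintype Ω] (w : Ω → ℝ) : Prop :=
  (∀ ω, 0 ≤ w ω) ∧ (∑ ω, w ω) = 1

/-- The measure is regular: only the empty set has measure 0. -/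
def RegularW (w : Ω → ℝ) : Prop := ∀ X : Finset Ω, mea w X = 0 → X = ∅

/-- Conditional measure `μ_A(X) = μ(A ∩ X) / μ(A)`. -/
noncomputable def condMea [DecidableEq Ω] (w : Ω → ℝ) (A X : Finset Ω) : ℝ := mea w (A ∩ X) / mea w A

/-- `X` is `(m,t)`-stable for a set function `m`: `X` is nonempty and for every `E` with
`X ∩ E ≠ ∅` and `m E > 0`, `m (X ∩ E) / m E > t`. -/
def StableFor [DecidableEq Ω] (m : Finset Ω → ℝ) (t : ℝ) (X : Finset Ω) : Prop :=
  X.Nonempty ∧ ∀ E : Finset Ω, (X ∩ E).Nonempty → 0 < m E → t < m (X ∩ E) / m E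

/-- `S` is the `⊆`-least `(m,t)`-stable set. -/
def IsLeastStable [DecidableEq Ω] (m : Finset Ω → ℝ) (t : ℝ) (S : Finset Ω) : Prop :=
  StableFor m t S ∧ ∀ X : Finset Ω, StableFor m t X → S ⊆ X

/-- `w` represents the selection function `σ` for threshold `t`. -/
def RepresentsAt [DecidableEq Ω] (w : Ω → ℝ) (t : ℝ) (σ : Finset Ω → Finset Ω) : Prop :=
  ∀ E : Finset Ω, (0 < mea w E → IsLeastStable (condMea w E) t (σ E)) ∧
    (mea w E = 0 → σ E = ∅)

/-- Selection axiom (S1): `σ(X) = ∅` only if `X = ∅`. -/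
def SelA1 (σ : Finset Ω → Finset Ω) : Prop := ∀ X : Finset Ω, σ X = ∅ → X = ∅

/-- Selection axiom (S2): `σ(X) ⊆ X`. -/
def SelA2 (σ : Finset Ω → Finset Ω) : Prop := ∀ X : Finset Ω, σ X ⊆ X

/-- Selection axiom (S3): if `σ(A) ∩ B ≠ ∅` then `σ(A ∩ B) ⊆ σ(A) ∩ B`. -/
def SelA3 [DecidableEq Ω] (σ : Finset Ω → Finset Ω) : Prop :=
  ∀ A B : Finset Ω, (σ A ∩ B).Nonempty → σ (A ∩ B) ⊆ σ A ∩ B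

/-- Selection axiom (S4ₙ) for every `n`: if `σ(A ∪ Xᵢ) = Xᵢ` for all `i`, then
`σ(A ∪ ⋃ᵢ Xᵢ) ⊆ ⋃ᵢ Xᵢ`. -/
def SelA4 [DecidableEq Ω] (σ : Finset Ω → Finset Ω) : Prop :=
  ∀ n : ℕ, ∀ A : Finset Ω, ∀ X : Fin (n + 1) → Finset Ω,
    (∀ i, σ (A ∪ X i) = X i) →
    σ (A ∪ univ.biUnion X) ⊆ univ.biUnion X

/-- `ω ≻_σ X` iff `ω ∉ X` and `σ (X ∪ {ω}) = {ω}`. -/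
def succS [DecidableEq Ω] (σ : Finset Ω → Finset Ω) (ω : Ω) (X : Finset Ω) : Prop :=
  ω ∉ X ∧ σ (X ∪ {ω}) = {ω}

/-- `X ⪰_σ ω` iff `ω ∈ X` or `σ (X ∪ {ω}) ≠ {ω}`. -/
def succeqS [DecidableEq Ω] (σ : Finset Ω → Finset Ω) (X : Finset Ω) (ω : Ω) : Prop :=
  ω ∈ X ∨ σ (X ∪ {ω}) ≠ {ω}

/-- `A ⪰*_σ B` iff either `A` is a singleton `{a}` with `a ≻_σ B`, or `B` is a singleton
`{b}` with `A ⪰_σ b`. -/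
def geStar [DecidableEq Ω] (σ : Finset Ω → Finset Ω) (A B : Finset Ω) : Prop :=
  (∃ a, A = {a} ∧ succS σ a B) ∨ (∃ b, B = {b} ∧ succeqS σ A b)

/-- Two sequences of sets are balanced: every state occurs in exactly as many `A i`'s
as `B i`'s. -/
def BalancedSeq {n : ℕ} (A B : Fin n → Finset Ω) : Prop :=
  ∀ ω : Ω, Nat.card {i // ω ∈ A i} = Nat.card {i // ω ∈ B i}

/-- `(A_i) ≤₀ (B_i)`: every state occurs in at most as many `A i`'s as `B i`'s. -/
def DomSeq {n : ℕ} (A B : Fin n → Finset Ω) : Prop :=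
  ∀ ω : Ω, Nat.card {i // ω ∈ A i} ≤ Nat.card {i // ω ∈ B i}

/-- The (Scott) axiom for the induced order `⪰*_σ`. -/
def ScottAx [DecidableEq Ω] (σ : Finset Ω → Finset Ω) : Prop :=
  ∀ n : ℕ, ∀ A B : Fin (n + 1) → Finset Ω, BalancedSeq A B →
    (∀ i, geStar σ (A i) (B i)) → ∀ i, geStar σ (B i) (A i)

/-!
Write `b ≻ K` for `b ∉ K` and `σ (K ∪ {b}) = {b}`. If `w` represents `σ` for a threshold `t ≥ 1/2`,
then `b ≻ K` holds exactly when `t * w(K) < (1 - t) * w(b)`. Consider a set `A` with `m` elements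
such that `b ≻ K` for all `k`-element `K ⊆ A`, `c ≻ {b}`, but not `c ≻ A`. The last two conditions
force `w(b) < w(A)`, while the first, applied to a `k`-subset of at least average weight, forces
`t * k * w(A) < (1 - t) * m * w(b)`; hence `t * k < (1 - t) * m`, that is, `t < m / (m + k)`.
Conversely, every `t` in `[1/2, m / (m + k))` is realised by giving all elements of `A` weight `1`
and choosing `w(b)`, `w(c)` suitably. A rational number `m / (m + k)` strictly between `t` and `q`
separates the two thresholds.
-/

lemma mea_nonneg {w : Ω → ℝ} (hw : ∀ x, 0 ≤ w x) (A : Finset Ω) : 0 ≤ mea w A :=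
  sum_nonneg fun x _ => hw x

lemma mea_mono {w : Ω → ℝ} (hw : ∀ x, 0 ≤ w x) {A B : Finset Ω} (h : A ⊆ B) :
    mea w A ≤ mea w B :=
  sum_mono_set_of_nonneg hw h

lemma mea_singleton (w : Ω → ℝ) (x : Ω) : mea w {x} = w x :=
  sum_singleton w x

lemma le_mea_of_mem {w : Ω → ℝ} (hw : ∀ x, 0 ≤ w x) {A : Finset Ω} {x : Ω} (hx : x ∈ A) :
    w x ≤ mea w A :=
  single_le_sum (fun y _ => hw y) hx

lemma mea_smul (c : ℝ) (w : Ω → ℝ) (A : Finset Ω) : mea (c • w) A = c * mea w A :=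
  (mul_sum A w c).symm

lemma exists_mem_mul_mea_le_mul_mea_erase [DecidableEq Ω] (w : Ω → ℝ) {A : Finset Ω} {n : ℕ}
    (hA : #A = n + 1) : ∃ x ∈ A, (n : ℝ) * mea w A ≤ (n + 1) * mea w (A.erase x) := by
  obtain ⟨x, hx, hmin⟩ := exists_min_image A w (card_pos.1 (by omega))
  have hcard : #(A.erase x) = n := by rw [card_erase_of_mem hx, hA, Nat.add_sub_cancel]
  have hle : n * w x ≤ mea w (A.erase x) := by
    simpa only [hcard, nsmul_eq_mul, mea] using
      card_nsmul_le_sum (A.erase x) w (w x) fun y hy => hmin y (mem_of_mem_erase hy)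
  have hsum : mea w (A.erase x) + w x = mea w A := sum_erase_add A w hx
  exact ⟨x, hx, by rw [← hsum]; linarith⟩

lemma exists_subset_card_eq_mul_mea_le (w : Ω → ℝ) {A : Finset Ω} {k : ℕ} (hk : k ≤ #A) :
    ∃ K ⊆ A, #K = k ∧ (k : ℝ) * mea w A ≤ #A * mea w K := by
  classical
  induction hk using Nat.decreasingInduction with
  | self => exact ⟨A, Subset.rfl, rfl, le_rfl⟩
  | of_succ k _ ih =>
    obtain ⟨K, hKA, hKcard, hK⟩ := ih
    obtain ⟨x, hx, herase⟩ := exists_mem_mul_mea_le_mul_mea_erase w hKcard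
    refine ⟨K.erase x, (erase_subset x K).trans hKA, by rw [card_erase_of_mem hx, hKcard]; rfl, ?_⟩
    push_cast at hK
    refine le_of_mul_le_mul_left ?_ (by positivity : (0 : ℝ) < k + 1)
    calc (k + 1) * (k * mea w A) = k * ((k + 1) * mea w A) := by ring
      _ ≤ k * (#A * mea w K) := by gcongr
      _ = #A * (k * mea w K) := by ring
      _ ≤ #A * ((k + 1) * mea w (K.erase x)) := by gcongr
      _ = (k + 1) * (#A * mea w (K.erase x)) := by ring

section Stability

variable [DecidableEq Ω] {w : Ω → ℝ} {t : ℝ} {X Y E : Finset Ω} {x : Ω}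

lemma StableFor.mul_mea_lt (hX : StableFor (mea w) t X) (hXE : (X ∩ E).Nonempty)
    (hE : 0 < mea w E) : t * mea w E < mea w (X ∩ E) :=
  (lt_div_iff₀ hE).1 (hX.2 E hXE hE)

-- Both `X \ Y` and `Y \ X` would take up more than half of the symmetric difference.
lemma StableFor.mea_sdiff_eq_zero_or (hw : ∀ x, 0 ≤ w x) (ht : 1 / 2 ≤ t)
    (hX : StableFor (mea w) t X) (hY : StableFor (mea w) t Y) :
    mea w (X \ Y) = 0 ∨ mea w (Y \ X) = 0 := by
  by_contra! ⟨hXY, hYX⟩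
  have hsum : mea w (symmDiff X Y) = mea w (X \ Y) + mea w (Y \ X) :=
    sum_union disjoint_sdiff_sdiff
  have hpos : 0 < mea w (symmDiff X Y) := by
    rw [hsum]
    exact add_pos ((mea_nonneg hw _).lt_of_ne' hXY) ((mea_nonneg hw _).lt_of_ne' hYX)
  have hXinter : X ∩ symmDiff X Y = X \ Y := by grind [mem_symmDiff]
  have hYinter : Y ∩ symmDiff X Y = Y \ X := by grind [mem_symmDiff]
  have hXlt := hX.mul_mea_lt (hXinter ▸ nonempty_of_sum_ne_zero hXY) hpos
  have hYlt := hY.mul_mea_lt (hYinter ▸ nonempty_of_sum_ne_zero hYX) hpos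
  rw [hXinter] at hXlt
  rw [hYinter] at hYlt
  nlinarith

lemma stableFor_singleton_iff (ht : 0 ≤ t) (hE : 0 < mea w E) (hmax : ∀ F, mea w F ≤ mea w E)
    (hx : x ∈ E) : StableFor (mea w) t {x} ↔ t * mea w E < w x := by
  refine ⟨fun h => ?_, fun h => ⟨singleton_nonempty x, fun F hF hFpos => ?_⟩⟩
  · have hxE : {x} ∩ E = {x} := singleton_inter_of_mem hx
    have hlt := h.mul_mea_lt (by rw [hxE]; exact singleton_nonempty x) hE
    rwa [hxE, mea_singleton] at hlt
  · have hxF : x ∈ F := by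
      obtain ⟨y, hy⟩ := hF
      obtain ⟨rfl, hyF⟩ : y = x ∧ y ∈ F := by simpa using hy
      exact hyF
    rw [singleton_inter_of_mem hxF, mea_singleton, lt_div_iff₀ hFpos]
    exact (mul_le_mul_of_nonneg_left (hmax F) ht).trans_lt h

variable [Fintype Ω]

lemma StableFor.inter_of_mea_sdiff_eq_zero (hw : ∀ x, 0 ≤ w x) (ht : 0 ≤ t)
    (huniv : 0 < mea w univ) (hX : StableFor (mea w) t X) (hXY : mea w (X \ Y) = 0) :
    StableFor (mea w) t (X ∩ Y) := by
  have hle : ∀ F, mea w (X ∩ F) ≤ mea w (X ∩ Y ∩ F) := fun F => by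
    have hsplit : mea w (X ∩ F ∩ Y) + mea w ((X ∩ F) \ Y) = mea w (X ∩ F) :=
      sum_inter_add_sum_sdiff _ _ _
    have hnull : mea w ((X ∩ F) \ Y) ≤ mea w (X \ Y) :=
      mea_mono hw (sdiff_subset_sdiff inter_subset_left Subset.rfl)
    rw [inter_right_comm]
    linarith
  refine ⟨?_, fun F hF hFpos => ?_⟩
  · have hpos : 0 < mea w (X ∩ Y ∩ univ) :=
      calc 0 ≤ t * mea w univ := mul_nonneg ht huniv.le
        _ < mea w (X ∩ univ) := hX.mul_mea_lt (by simpa only [inter_univ] using hX.1) huniv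
        _ ≤ mea w (X ∩ Y ∩ univ) := hle univ
    exact (nonempty_of_sum_ne_zero hpos.ne').mono inter_subset_left
  · have hXF : (X ∩ F).Nonempty := hF.mono (inter_subset_inter_right inter_subset_left)
    exact (lt_div_iff₀ hFpos).2 ((hX.mul_mea_lt hXF hFpos).trans_le (hle F))

lemma StableFor.inter (hw : ∀ x, 0 ≤ w x) (ht : 1 / 2 ≤ t) (huniv : 0 < mea w univ)
    (hX : StableFor (mea w) t X) (hY : StableFor (mea w) t Y) :
    StableFor (mea w) t (X ∩ Y) := by
  have ht' : 0 ≤ t := by linarith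
  rcases hX.mea_sdiff_eq_zero_or hw ht hY with hXY | hYX
  · exact hX.inter_of_mea_sdiff_eq_zero hw ht' huniv hXY
  · rw [inter_comm]
    exact hY.inter_of_mea_sdiff_eq_zero hw ht' huniv hYX

lemma stableFor_univ [Nonempty Ω] (m : Finset Ω → ℝ) (ht : t < 1) : StableFor m t univ :=
  ⟨univ_nonempty, fun E _ hE => by rwa [univ_inter, div_self hE.ne']⟩

lemma exists_isLeastStable (hw : ∀ x, 0 ≤ w x) (ht : 1 / 2 ≤ t) (ht' : t < 1)
    (huniv : 0 < mea w univ) : ∃ S, IsLeastStable (mea w) t S := by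
  classical
  have : Nonempty Ω := univ_nonempty_iff.1 (nonempty_of_sum_ne_zero huniv.ne')
  refine ⟨({X | StableFor (mea w) t X} : Finset (Finset Ω)).inf id, ?_, fun X hX => ?_⟩
  · exact inf_induction (stableFor_univ _ ht') (fun X hX Y hY => hX.inter hw ht huniv hY)
      fun X hX => (mem_filter.1 hX).2
  · exact inf_le (f := id) (mem_filter.2 ⟨mem_univ X, hX⟩)

end Stability

section Conditioning

variable [DecidableEq Ω]

/-- The weights of the conditional measure `μ_E`, as weights on the whole of `Ω`; statements about
measures given by weights thus apply to conditional measures. -/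
noncomputable def condWeight (w : Ω → ℝ) (E : Finset Ω) (x : Ω) : ℝ :=
  if x ∈ E then w x / mea w E else 0

lemma condMea_eq_mea_condWeight (w : Ω → ℝ) (E : Finset Ω) :
    condMea w E = mea (condWeight w E) := by
  funext X
  simp only [condMea, condWeight, mea, sum_ite_mem, sum_div, inter_comm E X]

lemma condWeight_nonneg {w : Ω → ℝ} (hw : ∀ x, 0 ≤ w x) (E : Finset Ω) (x : Ω) :
    0 ≤ condWeight w E x := by
  unfold condWeight
  split_ifs
  exacts [div_nonneg (hw x) (mea_nonneg hw E), le_rfl]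

lemma mea_condWeight_of_subset {w : Ω → ℝ} {E F : Finset Ω} (hE : mea w E ≠ 0) (h : E ⊆ F) :
    mea (condWeight w E) F = 1 := by
  rw [← condMea_eq_mea_condWeight, condMea, inter_eq_left.2 h, div_self hE]

lemma mea_condWeight_le_one {w : Ω → ℝ} (hw : ∀ x, 0 ≤ w x) (E F : Finset Ω) :
    mea (condWeight w E) F ≤ 1 := by
  rw [← condMea_eq_mea_condWeight]
  exact div_le_one_of_le₀ (mea_mono hw inter_subset_left) (mea_nonneg hw E)

lemma condMea_smul {c : ℝ} (hc : c ≠ 0) (w : Ω → ℝ) (E : Finset Ω) :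
    condMea (c • w) E = condMea w E := by
  funext X
  simp only [condMea, mea_smul, mul_div_mul_left _ _ hc]

lemma stableFor_condMea_singleton_iff {w : Ω → ℝ} {t : ℝ} {E : Finset Ω} {x : Ω}
    (hw : ∀ x, 0 ≤ w x) (ht : 0 ≤ t) (hE : 0 < mea w E) (hx : x ∈ E) :
    StableFor (condMea w E) t {x} ↔ t * mea w E < w x := by
  have hone : mea (condWeight w E) E = 1 := mea_condWeight_of_subset hE.ne' Subset.rfl
  rw [condMea_eq_mea_condWeight,
    stableFor_singleton_iff ht (hone ▸ one_pos) (hone ▸ mea_condWeight_le_one hw E) hx,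
    hone, mul_one, condWeight, if_pos hx, lt_div_iff₀ hE]

end Conditioning

section Representation

variable [DecidableEq Ω] {w : Ω → ℝ} {t : ℝ} {σ : Finset Ω → Finset Ω}

lemma exists_representsAt [Finite Ω] (hw : ∀ x, 0 ≤ w x) (ht : 1 / 2 ≤ t) (ht' : t < 1) :
    ∃ σ, RepresentsAt w t σ := by
  cases nonempty_fintype Ω
  have hexists (E : Finset Ω) :
      ∃ S, (0 < mea w E → IsLeastStable (condMea w E) t S) ∧ (mea w E = 0 → S = ∅) := by
    rcases (mea_nonneg hw E).eq_or_lt with hE | hE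
    · exact ⟨∅, fun h => absurd hE h.ne, fun _ => rfl⟩
    · have huniv : mea (condWeight w E) univ = 1 :=
        mea_condWeight_of_subset hE.ne' (subset_univ E)
      obtain ⟨S, hS⟩ :=
        exists_isLeastStable (condWeight_nonneg hw E) ht ht' (huniv ▸ one_pos)
      rw [← condMea_eq_mea_condWeight] at hS
      exact ⟨S, fun _ => hS, fun h => absurd h hE.ne'⟩
  choose σ hσ using hexists
  exact ⟨σ, hσ⟩

lemma RepresentsAt.smul {c : ℝ} (hc : 0 < c) (h : RepresentsAt w t σ) :
    RepresentsAt (c • w) t σ := fun E => by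
  rw [condMea_smul hc.ne', mea_smul, mul_pos_iff_of_pos_left hc, mul_eq_zero_iff_left hc.ne']
  exact h E

lemma RepresentsAt.exists_isProbWeight [Fintype Ω] (hw : ∀ x, 0 ≤ w x) (huniv : 0 < mea w univ)
    (h : RepresentsAt w t σ) : ∃ v, IsProbWeight v ∧ RepresentsAt v t σ := by
  refine ⟨(mea w univ)⁻¹ • w, ⟨fun x => ?_, ?_⟩, h.smul (inv_pos.2 huniv)⟩
  · exact mul_nonneg (inv_pos.2 huniv).le (hw x)
  · exact (mea_smul _ w univ).trans (inv_mul_cancel₀ huniv.ne')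

lemma RepresentsAt.eq_singleton_iff (h : RepresentsAt w t σ) (hw : ∀ x, 0 ≤ w x) (ht : 0 ≤ t)
    {E : Finset Ω} {x : Ω} (hx : x ∈ E) : σ E = {x} ↔ t * mea w E < w x := by
  rcases (mea_nonneg hw E).eq_or_lt with hE | hE
  · have hwx : w x ≤ 0 := hE ▸ le_mea_of_mem hw hx
    simp only [(h E).2 hE.symm, ← hE, mul_zero, hwx.not_gt, iff_false]
    exact (singleton_ne_empty x).symm
  · obtain ⟨hstable, hleast⟩ := (h E).1 hE
    rw [← stableFor_condMea_singleton_iff hw ht hE hx]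
    refine ⟨fun hσ => hσ ▸ hstable, fun hx => ?_⟩
    exact (subset_singleton_iff.1 (hleast _ hx)).resolve_left hstable.1.ne_empty

lemma RepresentsAt.succS_iff (h : RepresentsAt w t σ) (hw : ∀ x, 0 ≤ w x) (ht : 1 / 2 ≤ t)
    (x : Ω) (K : Finset Ω) : succS σ x K ↔ t * mea w K < (1 - t) * w x := by
  have ht' : 0 ≤ t := by linarith
  by_cases hx : x ∈ K
  · have hle : (1 - t) * w x ≤ t * mea w K :=
      mul_le_mul (by linarith) (le_mea_of_mem hw hx) (hw x) ht'
    exact iff_of_false (fun hs => hs.1 hx) hle.not_gt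
  · have hmea : mea w (K ∪ {x}) = mea w K + w x := by
      rw [mea, sum_union (disjoint_singleton_right.2 hx), sum_singleton, mea]
    rw [succS, h.eq_singleton_iff hw ht' (mem_union_right K (mem_singleton_self x)), hmea]
    constructor
    · rintro ⟨-, hlt⟩
      linarith
    · exact fun hlt => ⟨hx, by linarith⟩

end Representation

section Ladder

variable [DecidableEq Ω]

/-- The configuration of the relation `≻_σ` that separates thresholds: `b ≻_σ K` for all
`k`-element subsets `K` of `A`, and `c ≻_σ {b}`, but not `c ≻_σ A`. -/
structure HasLadder (σ : Finset Ω → Finset Ω) (A : Finset Ω) (k : ℕ) (b c : Ω) : Prop where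
  succS_of_card : ∀ K ⊆ A, #K = k → succS σ b K
  succS_singleton : succS σ c {b}
  not_succS : ¬ succS σ c A

variable {t : ℝ} {A : Finset Ω} {k : ℕ} {b c : Ω}

theorem HasLadder.mul_lt_mul_card {w : Ω → ℝ} {σ : Finset Ω → Finset Ω}
    (hσ : HasLadder σ A k b c) (h : RepresentsAt w t σ) (hw : ∀ x, 0 ≤ w x) (ht : 1 / 2 ≤ t)
    (hk : k ≤ #A) : t * k < (1 - t) * #A := by
  obtain ⟨K, hKA, hKcard, hK⟩ := exists_subset_card_eq_mul_mea_le w hk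
  have hbK := (h.succS_iff hw ht b K).1 (hσ.succS_of_card K hKA hKcard)
  have hcb := (h.succS_iff hw ht c {b}).1 hσ.succS_singleton
  have hAc := not_lt.1 (mt (h.succS_iff hw ht c A).2 hσ.not_succS)
  have ht₀ : 0 < t := by linarith
  have ht₁ : 0 < 1 - t :=
    pos_of_mul_pos_left ((mul_nonneg ht₀.le (mea_nonneg hw K)).trans_lt hbK) (hw b)
  have hbA : w b < mea w A := by
    rw [mea_singleton] at hcb
    exact lt_of_mul_lt_mul_left (hcb.trans_le hAc) ht₀.le
  have hA : 0 < mea w A := (hw b).trans_lt hbA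
  have hcard : (0 : ℝ) < #A := by
    exact_mod_cast card_pos.2 (nonempty_of_sum_ne_zero hA.ne')
  refine lt_of_mul_lt_mul_right ?_ hA.le
  calc t * k * mea w A = t * (k * mea w A) := mul_assoc _ _ _
    _ ≤ t * (#A * mea w K) := by gcongr
    _ = #A * (t * mea w K) := mul_left_comm _ _ _
    _ < #A * ((1 - t) * w b) := by gcongr
    _ ≤ #A * ((1 - t) * mea w A) := by gcongr
    _ = (1 - t) * #A * mea w A := by ring

lemma RepresentsAt.hasLadder {w : Ω → ℝ} {σ : Finset Ω → Finset Ω} (h : RepresentsAt w t σ)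
    (hw : ∀ x, 0 ≤ w x) (ht : 1 / 2 ≤ t) (hA : ∀ x ∈ A, w x = 1) (hkb : t * k < (1 - t) * w b)
    (hbA : w b < #A) (hcA : (1 - t) * w c = t * #A) : HasLadder σ A k b c := by
  have hmea : ∀ K ⊆ A, mea w K = #K := fun K hK => by
    rw [mea, sum_congr rfl fun x hx => hA x (hK hx), sum_const, nsmul_one]
  refine ⟨fun K hK hKcard => ?_, ?_, ?_⟩ <;> rw [h.succS_iff hw ht]
  · rwa [hmea K hK, hKcard]
  · rw [mea_singleton, hcA]
    exact mul_lt_mul_of_pos_left hbA (by linarith)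
  · rw [hmea A Subset.rfl, hcA]
    exact lt_irrefl _

theorem exists_hasLadder_of_mul_lt_mul_card [Fintype Ω] (ht : 1 / 2 ≤ t)
    (hbc : b ≠ c) (hb : b ∉ A) (hc : c ∉ A) (hk : t * k < (1 - t) * #A) :
    ∃ w σ, IsProbWeight w ∧ RepresentsAt w t σ ∧ HasLadder σ A k b c := by
  have ht₀ : 0 < t := by linarith
  have ht₁ : 0 < 1 - t :=
    pos_of_mul_pos_left ((mul_nonneg ht₀.le k.cast_nonneg).trans_lt hk) (Nat.cast_nonneg _)
  obtain ⟨β, hkβ, hβA⟩ := exists_between ((div_lt_iff₀' ht₁).2 hk)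
  have hβ : 0 < β := lt_of_le_of_lt (by positivity) hkβ
  obtain ⟨γ, hγA⟩ : ∃ γ, (1 - t) * γ = t * #A := ⟨_, mul_div_cancel₀ _ ht₁.ne'⟩
  have hγ : 0 < γ := pos_of_mul_pos_right (hγA ▸ mul_pos ht₀ (hβ.trans hβA)) ht₁.le
  let w : Ω → ℝ := fun x => if x = c then γ else if x = b then β else 1
  have hwb : w b = β := (if_neg hbc).trans (if_pos rfl)
  have hwc : w c = γ := if_pos rfl
  have hwA : ∀ x ∈ A, w x = 1 := fun x hx =>
    (if_neg (ne_of_mem_of_not_mem hx hc)).trans (if_neg (ne_of_mem_of_not_mem hx hb))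
  have hw : ∀ x, 0 < w x := fun x => by
    dsimp only [w]
    split_ifs <;> positivity
  have hw' : ∀ x, 0 ≤ w x := fun x => (hw x).le
  obtain ⟨σ, hσ⟩ := exists_representsAt hw' ht (sub_pos.1 ht₁)
  have hladder : HasLadder σ A k b c :=
    hσ.hasLadder hw' ht hwA (hwb ▸ (div_lt_iff₀' ht₁).1 hkβ) (hwb ▸ hβA) (hwc ▸ hγA)
  have huniv : 0 < mea w univ := sum_pos (fun x _ => hw x) ⟨b, mem_univ b⟩
  obtain ⟨v, hv, hvσ⟩ := hσ.exists_isProbWeight hw' huniv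
  exact ⟨v, σ, hv, hvσ, hladder⟩

end Ladder

lemma exists_nat_odds_between {t q : ℝ} (ht : 0 ≤ t) (hq : q ≤ 1) (htq : t < q) :
    ∃ m k : ℕ, t * k < (1 - t) * m ∧ (1 - q) * m < q * k := by
  obtain ⟨r, htr, hrq⟩ := exists_rat_btwn htq
  lift r to ℚ≥0 using by exact_mod_cast ht.trans htr.le
  have hden : (0 : ℝ) < r.den := by exact_mod_cast r.den_pos
  have hr : ((r : ℚ) : ℝ) = r.num / r.den := by exact_mod_cast NNRat.cast_def (K := ℝ) r
  rw [hr, lt_div_iff₀ hden] at htr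
  rw [hr, div_lt_iff₀ hden] at hrq
  have hle : r.num ≤ r.den := by
    exact_mod_cast hrq.le.trans (mul_le_of_le_one_left hden.le hq)
  refine ⟨r.num, r.den - r.num, ?_⟩
  push_cast [hle]
  constructor <;> linarith

/-- Proposition `IncreasingThresholds`: for any thresholds
`t < q` in `[1/2, 1)` there is a selection function on some finite nonempty set that is
`t`-representable but not `q`-representable. -/
theorem stmt15 (t q : ℝ) (ht0 : 1 / 2 ≤ t) (ht1 : t < 1) (hq0 : 1 / 2 ≤ q) (hq1 : q < 1)
    (htq : t < q) :
    ∃ (m : ℕ) (σ : Finset (Fin (m + 1)) → Finset (Fin (m + 1))),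
      (∃ w : Fin (m + 1) → ℝ, IsProbWeight w ∧ RepresentsAt w t σ) ∧
      ¬ ∃ w : Fin (m + 1) → ℝ, IsProbWeight w ∧ RepresentsAt w q σ := by
  obtain ⟨m, k, hmt, hmq⟩ := exists_nat_odds_between (by linarith) hq1.le htq
  have hkm : k ≤ m := by
    have : t * k ≤ t * m := hmt.le.trans (by gcongr; linarith)
    exact_mod_cast le_of_mul_le_mul_left this (by linarith)
  let A : Finset (Fin (m + 1 + 1)) := {0, 1}ᶜ
  have hA : #A = m := by
    rw [card_compl, card_pair Fin.zero_ne_one, Fintype.card_fin]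
    rfl
  obtain ⟨w, σ, hw, hwσ, hσ⟩ := exists_hasLadder_of_mul_lt_mul_card (A := A) ht0
    Fin.zero_ne_one (by simp [A]) (by simp [A]) (hA.symm ▸ hmt)
  refine ⟨m + 1, σ, ⟨w, hw, hwσ⟩, ?_⟩
  rintro ⟨u, hu, huσ⟩
  have hkq : q * k < (1 - q) * m := hA ▸ hσ.mul_lt_mul_card huσ hu.1 hq0 (hA.symm ▸ hkm)
  exact hkq.not_gt hmq
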